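/- Let H and H₋₁ be real separable Hilbert spaces with H continuously embedded in H₋₁, and let B^{1/2} : H → H be compact with ‖x‖_{H₋₁} = ‖B^{1/2}x‖_H. If a sequence of probability measures (μₙ) on H satisfies sup_n ∫_H ‖x‖² dμₙ(x) ≤ c for a constant c, then (μₙ), viewed as measures on H₋₁, is tight and has uniformly integrable first moments, hence relatively compact in the 1-Wasserstein space P₁(H₋₁). -/

import Mathlib

open MeasureTheory Filter
open scoped Topology ENNReal

/-- A coupling of two measures: a measure on the product with the prescribed marginals. -/
def IsCoupling {X : Type*} [MeasurableSpace X] (γ : Measure (X × X)) (μ ν : Measure X) : Prop :=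
  γ.map Prod.fst = μ ∧ γ.map Prod.snd = ν

/-- The Wasserstein-type transport distance associated with a cost function `c`, i.e. the
infimum over (finite-cost) couplings `γ` of `μ` and `ν` of `∫ c(x,y) dγ(x,y)`.
With `c = dist` this is the `1`-Wasserstein distance. -/
noncomputable def W1 {X : Type*} [MeasurableSpace X] (c : X → X → ℝ) (μ ν : Measure X) : ℝ :=
  sInf {r | ∃ γ : Measure (X × X), IsCoupling γ μ ν ∧
    Integrable (fun p => c p.1 p.2) γ ∧ r = ∫ p, c p.1 p.2 ∂γ}

/-- There is a coupling with transport cost at most `r`. -/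
def CouplingCost {X : Type*} [MeasurableSpace X] [PseudoEMetricSpace X]
    (μ ν : Measure X) (r : ℝ≥0∞) : Prop :=
  ∃ γ : Measure (X × X), IsCoupling γ μ ν ∧ ∫⁻ p, edist p.1 p.2 ∂γ ≤ r

section aux
variable {X : Type*} [MeasurableSpace X] [PseudoEMetricSpace X]

lemma CouplingCost.mono {μ ν : Measure X} {r r' : ℝ≥0∞} (h : CouplingCost μ ν r)
    (hr : r ≤ r') : CouplingCost μ ν r' := by
  obtain ⟨γ, h1, h2⟩ := h
  exact ⟨γ, h1, h2.trans hr⟩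

lemma CouplingCost.zero : CouplingCost (0 : Measure X) 0 0 :=
  ⟨0, by simp [IsCoupling], by simp⟩

lemma CouplingCost.add {μ ν μ' ν' : Measure X} {r r' : ℝ≥0∞} (h : CouplingCost μ ν r)
    (h' : CouplingCost μ' ν' r') : CouplingCost (μ + μ') (ν + ν') (r + r') := by
  obtain ⟨γ, ⟨h1, h2⟩, h3⟩ := h
  obtain ⟨γ', ⟨h1', h2'⟩, h3'⟩ := h'
  refine ⟨γ + γ', ⟨?_, ?_⟩, ?_⟩
  · rw [Measure.map_add _ _ measurable_fst, h1, h1']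
  · rw [Measure.map_add _ _ measurable_snd, h2, h2']
  · rw [lintegral_add_measure]; gcongr

lemma CouplingCost.sum {ι : Type*} (s : Finset ι) (μ ν : ι → Measure X) (r : ι → ℝ≥0∞)
    (h : ∀ i ∈ s, CouplingCost (μ i) (ν i) (r i)) :
    CouplingCost (∑ i ∈ s, μ i) (∑ i ∈ s, ν i) (∑ i ∈ s, r i) := by
  classical
  induction s using Finset.induction_on with
  | empty => simpa using CouplingCost.zero
  | insert a s ha ih =>
    rw [Finset.sum_insert ha, Finset.sum_insert ha, Finset.sum_insert ha]
    exact (h a (by simp)).add (ih fun i hi => h i (by simp [hi]))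

lemma CouplingCost.base [OpensMeasurableSpace X] (μ ν : Measure X) [IsFiniteMeasure μ]
    [IsFiniteMeasure ν] (h : μ Set.univ = ν Set.univ) (p : X) :
    CouplingCost μ ν (∫⁻ x, edist x p ∂μ + ∫⁻ x, edist x p ∂ν) := by
  have hm : Measurable fun x : X => edist x p := (by fun_prop : Continuous _).measurable
  have key : IsCoupling ((μ Set.univ)⁻¹ • μ.prod ν) μ ν := by
    by_cases h0 : μ Set.univ = 0
    · have e1 : μ = 0 := Measure.measure_univ_eq_zero.1 h0
      have e2 : ν = 0 := Measure.measure_univ_eq_zero.1 (h ▸ h0)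
      subst e1 e2
      simp [IsCoupling]
    · constructor
      · rw [Measure.map_smul, Measure.map_fst_prod, ← h, smul_smul,
          ENNReal.inv_mul_cancel h0 (measure_ne_top _ _), one_smul]
      · rw [Measure.map_smul, Measure.map_snd_prod, smul_smul,
          ENNReal.inv_mul_cancel h0 (measure_ne_top _ _), one_smul]
  refine ⟨_, key, ?_⟩
  generalize (μ Set.univ)⁻¹ • μ.prod ν = γ at key
  obtain ⟨h1, h2⟩ := key
  calc ∫⁻ q, edist q.1 q.2 ∂γ ≤ ∫⁻ q, (edist q.1 p + edist q.2 p) ∂γ :=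
        lintegral_mono fun q => edist_triangle_right _ _ _
    _ = ∫⁻ q, edist q.1 p ∂γ + ∫⁻ q, edist q.2 p ∂γ :=
        lintegral_add_left (hm.comp measurable_fst) _
    _ = _ := by
        rw [← h1, ← h2, lintegral_map hm measurable_fst, lintegral_map hm measurable_snd]

/-- One-sided decomposition. -/
lemma exists_decomp [OpensMeasurableSpace X] (μ : Measure X) [IsProbabilityMeasure μ]
    {ι : Type*} (s : Finset ι) (f : ι → X → ℝ≥0∞) (p : ι → X) (ε : ℝ≥0∞) (t : ι → ℝ≥0∞)
    (hf : ∀ i, Measurable (f i)) (hsum : ∀ x, ∑ i ∈ s, f i x ≤ 1)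
    (hp : ∀ i x, f i x * edist x (p i) ≤ f i x * ε)
    (ht : ∀ i ∈ s, t i ≤ ∫⁻ x, f i x ∂μ) :
    ∃ (α : ι → Measure X) (ρ : Measure X), μ = ∑ i ∈ s, α i + ρ ∧
      (∀ i ∈ s, α i Set.univ = t i) ∧ (∀ i ∈ s, ∫⁻ x, edist x (p i) ∂(α i) ≤ t i * ε) ∧
      ρ ≤ μ ∧ ρ Set.univ = 1 - ∑ i ∈ s, t i := by
  have ha : ∀ i ∈ s, ∫⁻ x, f i x ∂μ ≤ 1 := fun i hi => by
    calc ∫⁻ x, f i x ∂μ ≤ ∫⁻ x, 1 ∂μ := lintegral_mono fun x =>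
          (Finset.single_le_sum (f := fun i => f i x) (fun _ _ => zero_le) hi).trans (hsum x)
      _ = 1 := by simp
  set α : ι → Measure X := fun i => (t i / ∫⁻ x, f i x ∂μ) • μ.withDensity (f i) with hα
  have hmul : ∀ i ∈ s, t i / (∫⁻ x, f i x ∂μ) * (∫⁻ x, f i x ∂μ) = t i := fun i hi => by
    apply ENNReal.div_mul_cancel'
    · intro h0; simpa [h0] using ht i hi
    · intro h0; have := ha i hi; simp [h0] at this
  have hmass : ∀ i ∈ s, α i Set.univ = t i := fun i hi => by
    simp only [hα, Measure.smul_apply, smul_eq_mul]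
    rw [withDensity_apply _ MeasurableSet.univ, Measure.restrict_univ, hmul i hi]
  have hwd : ∀ (u : Finset ι), ∑ i ∈ u, μ.withDensity (f i) = μ.withDensity (fun x => ∑ i ∈ u, f i x) := by
    classical
    intro u
    induction u using Finset.induction_on with
    | empty => simp
    | insert a u ha ih =>
      rw [Finset.sum_insert ha, ih, ← withDensity_add_left (hf a)]
      congr 1
      ext x
      simp [Finset.sum_insert ha]
  have hle : ∑ i ∈ s, α i ≤ μ := by
    calc ∑ i ∈ s, α i ≤ ∑ i ∈ s, μ.withDensity (f i) := by
          refine Finset.sum_le_sum fun i hi => ?_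
          intro A
          simp only [hα, Measure.smul_apply, smul_eq_mul]
          exact mul_le_of_le_one_left zero_le (ENNReal.div_le_of_le_mul (by simpa using ht i hi))
      _ = μ.withDensity (fun x => ∑ i ∈ s, f i x) := hwd s
      _ ≤ μ.withDensity (fun _ => 1) := withDensity_mono (Eventually.of_forall hsum)
      _ = μ := by simp
  have hfin : IsFiniteMeasure (∑ i ∈ s, α i) := isFiniteMeasure_of_le μ hle
  refine ⟨α, μ - ∑ i ∈ s, α i, ?_, hmass, ?_, Measure.sub_le, ?_⟩
  · rw [add_comm, Measure.sub_add_cancel_of_le hle]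
  · intro i hi
    have hm : Measurable fun x : X => edist x (p i) := (by fun_prop : Continuous _).measurable
    simp only [hα]
    rw [lintegral_smul_measure, lintegral_withDensity_eq_lintegral_mul _ (hf i) hm, smul_eq_mul]
    calc _ ≤ t i / (∫⁻ x, f i x ∂μ) * ∫⁻ x, f i x * ε ∂μ := by
          gcongr with x
          exact hp i x
      _ = t i * ε := by
          rw [lintegral_mul_const _ (hf i), ← mul_assoc, hmul i hi]
  · rw [Measure.sub_apply MeasurableSet.univ hle, measure_univ, Measure.finsetSum_apply]
    rw [Finset.sum_congr rfl hmass]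

end aux

section normed
variable {W : Type*} [NormedAddCommGroup W] [MeasurableSpace W] [BorelSpace W]

lemma norm_bound {δ : ℝ} (hδ : 0 < δ) (x : W) :
    edist x 0 ≤ ENNReal.ofReal δ * ENNReal.ofReal (‖x‖ ^ 2) + ENNReal.ofReal (1 / δ) := by
  rw [edist_dist, dist_zero_right, ← ENNReal.ofReal_mul hδ.le,
    ← ENNReal.ofReal_add (by positivity) (by positivity)]
  apply ENNReal.ofReal_le_ofReal
  have : δ * (1 / δ) = 1 := by field_simp
  have h1 : 0 < 1 / δ := by positivity
  rcases le_total ‖x‖ (1 / δ) with h | h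
  · nlinarith [mul_nonneg hδ.le (sq_nonneg ‖x‖)]
  · have : 1 ≤ δ * ‖x‖ := by
      calc 1 = δ * (1 / δ) := this.symm
        _ ≤ _ := by gcongr
    nlinarith [norm_nonneg x]

lemma rem_bound {δ : ℝ} (hδ : 0 < δ) (μ ρ : Measure W) (hρ : ρ ≤ μ) (D : ℝ≥0∞)
    (hD : ∫⁻ x, ENNReal.ofReal (‖x‖ ^ 2) ∂μ ≤ D) :
    ∫⁻ x, edist x 0 ∂ρ ≤ ENNReal.ofReal δ * D + ENNReal.ofReal (1 / δ) * ρ Set.univ := by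
  calc ∫⁻ x, edist x 0 ∂ρ
      ≤ ∫⁻ x : W, (ENNReal.ofReal δ * ENNReal.ofReal (‖x‖ ^ 2) + ENNReal.ofReal (1 / δ)) ∂ρ :=
        lintegral_mono fun x => norm_bound hδ x
    _ = ENNReal.ofReal δ * ∫⁻ x, ENNReal.ofReal (‖x‖ ^ 2) ∂ρ
          + ENNReal.ofReal (1 / δ) * ρ Set.univ := by
        rw [lintegral_add_right _ measurable_const, lintegral_const,
          lintegral_const_mul _ (by fun_prop)]
    _ ≤ _ := by
        gcongr
        exact (lintegral_mono' hρ le_rfl).trans hD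

lemma coupling_bound {δ : ℝ} (hδ : 0 < δ) (μ ν : Measure W) [IsProbabilityMeasure μ]
    [IsProbabilityMeasure ν] (D : ℝ≥0∞)
    (hμ : ∫⁻ x, ENNReal.ofReal (‖x‖ ^ 2) ∂μ ≤ D) (hν : ∫⁻ x, ENNReal.ofReal (‖x‖ ^ 2) ∂ν ≤ D)
    {ι : Type*} (s : Finset ι) (f : ι → W → ℝ≥0∞) (p : ι → W) (ε : ℝ≥0∞) (t : ι → ℝ≥0∞)
    (hf : ∀ i, Measurable (f i)) (hsum : ∀ x, ∑ i ∈ s, f i x ≤ 1)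
    (hp : ∀ i x, f i x * edist x (p i) ≤ f i x * ε)
    (ht : ∀ i ∈ s, t i ≤ ∫⁻ x, f i x ∂μ) (ht' : ∀ i ∈ s, t i ≤ ∫⁻ x, f i x ∂ν) :
    CouplingCost μ ν (2 * (ε + (ENNReal.ofReal δ * D
      + ENNReal.ofReal (1 / δ) * (1 - ∑ i ∈ s, t i)))) := by
  obtain ⟨α, ρ, h1, h2, h3, h4, h5⟩ := exists_decomp μ s f p ε t hf hsum hp ht
  obtain ⟨β, σ, k1, k2, k3, k4, k5⟩ := exists_decomp ν s f p ε t hf hsum hp ht'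
  have hρf : IsFiniteMeasure ρ := isFiniteMeasure_of_le μ h4
  have hσf : IsFiniteMeasure σ := isFiniteMeasure_of_le ν k4
  have hts : ∑ i ∈ s, t i ≤ 1 := by
    have := congrArg (fun m : Measure W => m Set.univ) h1
    simp only [measure_univ, Measure.add_apply, Measure.finsetSum_apply] at this
    rw [Finset.sum_congr rfl h2] at this
    rw [this]; exact le_self_add
  have hA : CouplingCost (∑ i ∈ s, α i) (∑ i ∈ s, β i) (∑ i ∈ s, (t i * ε + t i * ε)) := by
    apply CouplingCost.sum
    intro i hi
    have hti : t i < ∞ := ((Finset.single_le_sum (fun _ _ => zero_le) hi).trans hts).trans_lt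
      ENNReal.one_lt_top
    have : IsFiniteMeasure (α i) := ⟨by rw [h2 i hi]; exact hti⟩
    have : IsFiniteMeasure (β i) := ⟨by rw [k2 i hi]; exact hti⟩
    exact (CouplingCost.base (α i) (β i) (by rw [h2 i hi, k2 i hi]) (p i)).mono
      (add_le_add (h3 i hi) (k3 i hi))
  have hB := (CouplingCost.base ρ σ (by rw [h5, k5]) 0).mono
    (add_le_add (rem_bound hδ μ ρ h4 D hμ) (rem_bound hδ ν σ k4 D hν))
  have hAB := hA.add hB
  rw [← h1, ← k1] at hAB
  refine hAB.mono ?_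
  rw [h5, k5, ← two_mul, mul_add 2 ε]
  refine add_le_add ?_ le_rfl
  rw [Finset.sum_add_distrib, ← two_mul, ← Finset.sum_mul]
  gcongr
  exact mul_le_of_le_one_left zero_le hts

/-- A finite continuous partial partition of unity. -/
lemma exists_partition {K : Set W} (hK : IsCompact K) {ε : ℝ} (hε : 0 < ε) :
    ∃ (s : Finset W) (f : W → BoundedContinuousFunction W NNReal),
      (∀ x, ∑ i ∈ s, f i x ≤ 1) ∧ (∀ x ∈ K, ∑ i ∈ s, f i x = 1) ∧
      (∀ i x, (f i x : ℝ≥0∞) * edist x i ≤ f i x * ENNReal.ofReal ε) := by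
  obtain ⟨t, -, htf, hcov⟩ := hK.finite_cover_balls (half_pos hε)
  set s := htf.toFinset
  let g : W → W → NNReal := fun i x => Real.toNNReal (ε - dist x i)
  let e : NNReal := Real.toNNReal (ε / 2)
  have he : 0 < e := by simp [e, hε]
  let G : W → NNReal := fun x => max (∑ i ∈ s, g i x) e
  have hg : ∀ i, Continuous (g i) := fun i => by
    show Continuous fun x => Real.toNNReal (ε - dist x i)
    fun_prop
  have hG : Continuous G := (continuous_finsetSum _ fun i _ => hg i).max continuous_const
  have hG0 : ∀ x, G x ≠ 0 := fun x => (he.trans_le (le_max_right _ _)).ne'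
  let F : W → W → NNReal := fun i x => min (g i x / G x) 1
  have hF : ∀ i, Continuous (F i) := fun i => ((hg i).div₀ hG hG0).min continuous_const
  have hFs : ∀ x, ∑ i ∈ s, F i x = (∑ i ∈ s, g i x) / G x := fun x => by
    rw [Finset.sum_div]
    refine Finset.sum_congr rfl fun i hi => ?_
    apply min_eq_left
    apply div_le_one_of_le₀ _ zero_le
    exact (Finset.single_le_sum (f := fun i => g i x) (fun _ _ => zero_le) hi).trans
      (le_max_left _ _)
  refine ⟨s, fun i => BoundedContinuousFunction.mkOfBound ⟨F i, hF i⟩ 1 ?_, ?_, ?_, ?_⟩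
  · intro x y
    have hx : F i x ≤ 1 := min_le_right _ _
    have hy : F i y ≤ 1 := min_le_right _ _
    have hx' : (F i x : ℝ) ≤ 1 := by exact_mod_cast hx
    have hy' : (F i y : ℝ) ≤ 1 := by exact_mod_cast hy
    show dist (F i x) (F i y) ≤ 1
    rw [NNReal.dist_eq, abs_le]
    constructor <;> linarith [(F i x).2, (F i y).2, (F i x).coe_nonneg, (F i y).coe_nonneg]
  · intro x
    show ∑ i ∈ s, F i x ≤ 1
    rw [hFs]
    exact div_le_one_of_le₀ (le_max_left _ _) zero_le
  · intro x hx
    show ∑ i ∈ s, F i x = 1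
    rw [hFs]
    have : e ≤ ∑ i ∈ s, g i x := by
      have := hcov hx
      simp only [Set.mem_iUnion, Metric.mem_ball] at this
      obtain ⟨i, hi, hd⟩ := this
      refine le_trans ?_ (Finset.single_le_sum (f := fun i => g i x) (fun _ _ => zero_le)
        (htf.mem_toFinset.2 hi))
      exact Real.toNNReal_le_toNNReal (by linarith)
    have h2 : G x = ∑ i ∈ s, g i x := max_eq_left this
    rw [← h2, div_self (hG0 x)]
  · intro i x
    show (F i x : ℝ≥0∞) * edist x i ≤ F i x * ENNReal.ofReal ε
    rcases le_total (dist x i) ε with h | h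
    · gcongr
      rw [edist_dist]
      exact ENNReal.ofReal_le_ofReal h
    · have : F i x = 0 := by
        have : g i x = 0 := Real.toNNReal_of_nonpos (by linarith)
        simp [F, this]
      simp [this]

lemma eventually_coupling [CompleteSpace W] [SecondCountableTopology W]
    (μ : ℕ → ProbabilityMeasure W) (ν : ProbabilityMeasure W)
    (hlim : Tendsto μ atTop (𝓝 ν)) (D : ℝ)
    (hμ : ∀ n, ∫⁻ x, ENNReal.ofReal (‖x‖ ^ 2) ∂(μ n : Measure W) ≤ ENNReal.ofReal D)
    (hν : ∫⁻ x, ENNReal.ofReal (‖x‖ ^ 2) ∂(ν : Measure W) ≤ ENNReal.ofReal D)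
    {η : ℝ} (hη : 0 < η) :
    ∀ᶠ n in atTop, CouplingCost (μ n : Measure W) ν (ENNReal.ofReal η) := by
  set D' := max D 1
  have hD' : 0 < D' := lt_of_lt_of_le one_pos (le_max_right _ _)
  have hDD : ENNReal.ofReal D ≤ ENNReal.ofReal D' := ENNReal.ofReal_le_ofReal (le_max_left _ _)
  set δ := η / (8 * D') with hδd
  have hδ : 0 < δ := by positivity
  set κ := min (η * δ / 16) (1 / 4) with hκd
  have hκ : 0 < κ := by positivity
  obtain ⟨K, hK, hKν⟩ := isTightMeasureSet_iff_exists_isCompact_measure_compl_le.1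
    (isTightMeasureSet_singleton (μ := (ν : Measure W))) (ENNReal.ofReal κ) (by simpa using hκ)
  have hKν := hKν _ rfl
  obtain ⟨s, f, hf1, hfK, hfe⟩ := exists_partition hK (ε := η / 8) (by positivity)
  have hfm : ∀ i, Measurable fun x => (f i x : ℝ≥0∞) := fun i =>
    (f i).continuous.measurable.coe_nnreal_ennreal
  set t : ℕ → W → ℝ≥0∞ := fun n i =>
    min (∫⁻ x, f i x ∂(μ n : Measure W)) (∫⁻ x, f i x ∂(ν : Measure W)) with ht
  have htl : Tendsto (fun n => ∑ i ∈ s, t n i) atTop (𝓝 (∑ i ∈ s, ∫⁻ x, f i x ∂(ν : Measure W))) := by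
    refine tendsto_finsetSum _ fun i _ => ?_
    have := (ProbabilityMeasure.tendsto_iff_forall_lintegral_tendsto.1 hlim (f i)).min
      (tendsto_const_nhds (x := ∫⁻ x, f i x ∂(ν : Measure W)))
    simpa using this
  have hb : 1 ≤ (∑ i ∈ s, ∫⁻ x, f i x ∂(ν : Measure W)) + ENNReal.ofReal κ := by
    rw [← lintegral_finsetSum _ (fun i _ => hfm i)]
    have hKm := hK.measurableSet
    calc (1 : ℝ≥0∞) = (ν : Measure W) K + (ν : Measure W) Kᶜ := by
          rw [measure_add_measure_compl hKm, measure_univ]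
      _ ≤ _ := by
          gcongr
          rw [← lintegral_indicator_one hKm]
          refine lintegral_mono fun x => ?_
          by_cases hx : x ∈ K
          · have := hfK x hx
            simp only [Set.indicator_of_mem hx, Pi.one_apply]
            exact_mod_cast this.ge
          · simp [hx]
  have hb2 : 1 - ENNReal.ofReal (2 * κ) < ∑ i ∈ s, ∫⁻ x, f i x ∂(ν : Measure W) := by
    by_contra hcon
    push Not at hcon
    have hle : 1 ≤ 1 - ENNReal.ofReal (2 * κ) + ENNReal.ofReal κ := hb.trans (by gcongr)
    have h : ENNReal.ofReal (2 * κ) ≤ 1 := by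
      rw [← ENNReal.ofReal_one]
      exact ENNReal.ofReal_le_ofReal (by linarith [min_le_right (η * δ / 16) (1 / 4 : ℝ)])
    · have h3 : 1 - ENNReal.ofReal (2 * κ) + ENNReal.ofReal κ < 1 - ENNReal.ofReal (2 * κ) + ENNReal.ofReal (2 * κ) := by
        apply ENNReal.add_lt_add_left (by simp)
        exact (ENNReal.ofReal_lt_ofReal_iff (by positivity)).2 (by linarith)
      rw [tsub_add_cancel_of_le h] at h3
      exact absurd hle (not_le.2 h3)
  filter_upwards [htl.eventually (lt_mem_nhds hb2)] with n hn
  have hmain := coupling_bound hδ (μ n : Measure W) ν (ENNReal.ofReal D') ((hμ n).trans hDD)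
    (hν.trans hDD) s (fun i x => (f i x : ℝ≥0∞)) id (ENNReal.ofReal (η / 8)) (t n) hfm
    (fun x => by exact_mod_cast hf1 x) hfe (fun i _ => min_le_left _ _) (fun i _ => min_le_right _ _)
  refine hmain.mono ?_
  have hm : 1 - ∑ i ∈ s, t n i ≤ ENNReal.ofReal (2 * κ) := by
    rw [tsub_le_iff_left]
    exact tsub_le_iff_right.1 hn.le
  calc _ ≤ 2 * (ENNReal.ofReal (η / 8) + (ENNReal.ofReal δ * ENNReal.ofReal D'
      + ENNReal.ofReal (1 / δ) * ENNReal.ofReal (2 * κ))) := by gcongr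
    _ = ENNReal.ofReal (2 * (η / 8 + (δ * D' + (1 / δ) * (2 * κ)))) := by
      rw [← ENNReal.ofReal_mul hδ.le, ← ENNReal.ofReal_mul (by positivity),
        ← ENNReal.ofReal_add (by positivity) (by positivity),
        ← ENNReal.ofReal_add (by positivity) (by positivity),
        ENNReal.ofReal_mul (by norm_num)]
      simp
    _ ≤ ENNReal.ofReal η := by
      apply ENNReal.ofReal_le_ofReal
      have e1 : δ * D' = η / 8 := by rw [hδd]; field_simp
      have e2 : (1 / δ) * (2 * κ) ≤ η / 8 := by
        calc (1 / δ) * (2 * κ) ≤ (1 / δ) * (2 * (η * δ / 16)) := by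
              gcongr
              exact min_le_left _ _
          _ = η / 8 := by field_simp; norm_num
      linarith

lemma W1_le [SecondCountableTopology W] {μ ν : Measure W} {r : ℝ} (hr : 0 ≤ r)
    (h : CouplingCost μ ν (ENNReal.ofReal r)) : W1 dist μ ν ≤ r := by
  obtain ⟨γ, hγ, hc⟩ := h
  have hm : AEStronglyMeasurable (fun p : W × W => dist p.1 p.2) γ :=
    (by fun_prop : Continuous fun p : W × W => dist p.1 p.2).aestronglyMeasurable
  have hlt : ∫⁻ p : W × W, ENNReal.ofReal (dist p.1 p.2) ∂γ ≤ ENNReal.ofReal r := by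
    simpa only [edist_dist] using hc
  have hint : Integrable (fun p : W × W => dist p.1 p.2) γ := by
    refine ⟨hm, ?_⟩
    rw [hasFiniteIntegral_iff_ofReal (Eventually.of_forall fun p => dist_nonneg)]
    exact hlt.trans_lt ENNReal.ofReal_lt_top
  refine le_trans (csInf_le ⟨0, ?_⟩ ⟨γ, hγ, hint, rfl⟩) ?_
  · rintro _ ⟨γ', -, -, rfl⟩
    exact integral_nonneg fun _ => dist_nonneg
  · rw [integral_eq_lintegral_of_nonneg_ae (Eventually.of_forall fun p => dist_nonneg) hm]
    exact ENNReal.toReal_le_of_le_ofReal hr hlt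

lemma W1_nonneg (μ ν : Measure W) : 0 ≤ W1 dist μ ν := by
  apply Real.sInf_nonneg
  rintro _ ⟨γ', -, -, rfl⟩
  exact integral_nonneg fun _ => dist_nonneg

end normed

/-- Let `H` and `H₋₁` be real separable Hilbert spaces with `H` compactly
embedded in `H₋₁` via `ι`, with `‖ι x‖_{H₋₁} = ‖B^{1/2} x‖_H` for the compact square root
`B^{1/2}`. If a sequence of probability measures `(μₙ)` on `H` has uniformly bounded second
moments, then the sequence `(ι_* μₙ)`, viewed in `H₋₁`, is tight, has uniformly integrable
first moments, and hence is relatively compact in the 1-Wasserstein space `P₁(H₋₁)`. -/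
theorem statement_3
    {H W : Type*}
    [NormedAddCommGroup H] [InnerProductSpace ℝ H] [CompleteSpace H]
    [SecondCountableTopology H] [MeasurableSpace H] [BorelSpace H]
    [NormedAddCommGroup W] [InnerProductSpace ℝ W] [CompleteSpace W]
    [SecondCountableTopology W] [MeasurableSpace W] [BorelSpace W]
    -- the embedding `ι : H → H₋₁` is linear, continuous and compact
    (ι : H →L[ℝ] W) (hι_inj : Function.Injective ⇑ι) (hι_compact : IsCompactOperator ⇑ι)
    -- the square root `S = B^{1/2}` realizing the `H₋₁` norm: `‖ι x‖ = ‖S x‖`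
    (S : H →L[ℝ] H) (hS_compact : IsCompactOperator ⇑S)
    (hnorm : ∀ x : H, ‖ι x‖ = ‖S x‖)
    (μ : ℕ → Measure H) (hprob : ∀ n, IsProbabilityMeasure (μ n))
    (c : ℝ)
    (hmom : ∀ n, ∫⁻ x, ENNReal.ofReal (‖x‖ ^ 2) ∂(μ n) ≤ ENNReal.ofReal c) :
    -- tightness of the pushforwards in `H₋₁`
    (∀ ε : ℝ, 0 < ε → ∃ K : Set W, IsCompact K ∧
        ∀ n, (μ n).map ι Kᶜ ≤ ENNReal.ofReal ε) ∧
      -- uniform integrability of first moments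
      (∀ ε : ℝ, 0 < ε → ∃ R : ℝ, 0 < R ∧
        ∀ n, ∫⁻ y in {y : W | R < ‖y‖}, ENNReal.ofReal ‖y‖ ∂((μ n).map ι)
          ≤ ENNReal.ofReal ε) ∧
      -- relative compactness in `(P₁(H₋₁), d_{1,-1})`
      (∃ φ : ℕ → ℕ, StrictMono φ ∧ ∃ ν : Measure W, IsProbabilityMeasure ν ∧
        Integrable (fun y : W => ‖y‖) ν ∧
        Tendsto (fun k => W1 dist ((μ (φ k)).map ι) ν) atTop (𝓝 0)) := by
  have hmι : Measurable ι := ι.continuous.measurable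
  set c' := max c 1 with hc'
  have hc'0 : 0 < c' := lt_of_lt_of_le one_pos (le_max_right _ _)
  have hmom' : ∀ n, ∫⁻ x, ENNReal.ofReal (‖x‖ ^ 2) ∂(μ n) ≤ ENNReal.ofReal c' := fun n =>
    (hmom n).trans (ENNReal.ofReal_le_ofReal (le_max_left _ _))
  set D : ℝ := (‖ι‖ ^ 2 + 1) * c' with hD
  have hD0 : 0 < D := by positivity
  have hmomW : ∀ n, ∫⁻ y, ENNReal.ofReal (‖y‖ ^ 2) ∂((μ n).map ι) ≤ ENNReal.ofReal D := by
    intro n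
    rw [lintegral_map (by fun_prop) hmι]
    calc ∫⁻ x, ENNReal.ofReal (‖ι x‖ ^ 2) ∂(μ n)
        ≤ ∫⁻ x, ENNReal.ofReal (‖ι‖ ^ 2 + 1) * ENNReal.ofReal (‖x‖ ^ 2) ∂(μ n) := by
          refine lintegral_mono fun x => ?_
          rw [← ENNReal.ofReal_mul (by positivity)]
          apply ENNReal.ofReal_le_ofReal
          have h1 := ι.le_opNorm x
          calc ‖ι x‖ ^ 2 ≤ (‖ι‖ * ‖x‖) ^ 2 := by gcongr
            _ = ‖ι‖ ^ 2 * ‖x‖ ^ 2 := by ring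
            _ ≤ _ := by gcongr; linarith
      _ = ENNReal.ofReal (‖ι‖ ^ 2 + 1) * ∫⁻ x, ENNReal.ofReal (‖x‖ ^ 2) ∂(μ n) :=
          lintegral_const_mul _ (by fun_prop)
      _ ≤ ENNReal.ofReal (‖ι‖ ^ 2 + 1) * ENNReal.ofReal c' := by gcongr; exact hmom' n
      _ = ENNReal.ofReal D := by rw [← ENNReal.ofReal_mul (by positivity)]
  have tight : ∀ ε : ℝ, 0 < ε → ∃ K : Set W, IsCompact K ∧
      ∀ n, (μ n).map ι Kᶜ ≤ ENNReal.ofReal ε := by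
    intro ε hε
    set R := Real.sqrt (c' / ε) with hR
    have hq : 0 < c' / ε := by positivity
    have hK : IsCompact (closure (ι '' Metric.closedBall 0 R)) :=
      IsCompactOperator.isCompact_closure_image_closedBall (f := (ι : H →ₗ[ℝ] W)) hι_compact R
    refine ⟨_, hK, fun n => ?_⟩
    rw [Measure.map_apply hmι hK.measurableSet.compl]
    have hsub : (ι ⁻¹' (closure (ι '' Metric.closedBall 0 R))ᶜ)
        ⊆ {x | ENNReal.ofReal (c' / ε) ≤ ENNReal.ofReal (‖x‖ ^ 2)} := by
      intro x hx
      apply ENNReal.ofReal_le_ofReal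
      by_contra hcon
      push Not at hcon
      apply hx
      apply subset_closure
      refine ⟨x, ?_, rfl⟩
      rw [mem_closedBall_zero_iff]
      exact Real.le_sqrt_of_sq_le hcon.le
    refine (measure_mono hsub).trans ?_
    have hmk := (mul_meas_ge_le_lintegral₀ (μ := μ n)
      (f := fun x => ENNReal.ofReal (‖x‖ ^ 2)) (by fun_prop) (ENNReal.ofReal (c' / ε))).trans
      (hmom' n)
    rw [mul_comm, ← ENNReal.le_div_iff_mul_le (by simp [hq]) (by simp),
      ← ENNReal.ofReal_div_of_pos hq] at hmk
    refine hmk.trans (ENNReal.ofReal_le_ofReal (le_of_eq ?_))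
    field_simp
  refine ⟨tight, ?_, ?_⟩
  · intro ε hε
    have hR : 0 < D / ε := by positivity
    refine ⟨D / ε, hR, fun n => ?_⟩
    calc ∫⁻ y in {y : W | D / ε < ‖y‖}, ENNReal.ofReal ‖y‖ ∂((μ n).map ι)
        ≤ ∫⁻ y in {y : W | D / ε < ‖y‖},
            ENNReal.ofReal (ε / D) * ENNReal.ofReal (‖y‖ ^ 2) ∂((μ n).map ι) := by
          refine setLIntegral_mono (by fun_prop) fun y hy => ?_
          rw [← ENNReal.ofReal_mul (by positivity)]
          apply ENNReal.ofReal_le_ofReal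
          have hy' : D / ε < ‖y‖ := hy
          have h1 : 1 ≤ ε / D * ‖y‖ := by
            calc 1 = ε / D * (D / ε) := by field_simp
              _ ≤ _ := by gcongr
          nlinarith [norm_nonneg y]
      _ ≤ ∫⁻ y, ENNReal.ofReal (ε / D) * ENNReal.ofReal (‖y‖ ^ 2) ∂((μ n).map ι) :=
          setLIntegral_le_lintegral _ _
      _ = ENNReal.ofReal (ε / D) * ∫⁻ y, ENNReal.ofReal (‖y‖ ^ 2) ∂((μ n).map ι) :=
          lintegral_const_mul _ (by fun_prop)
      _ ≤ ENNReal.ofReal (ε / D) * ENNReal.ofReal D := by gcongr; exact hmomW n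
      _ = ENNReal.ofReal ε := by
          rw [← ENNReal.ofReal_mul (by positivity)]
          congr 1
          field_simp
  · let P : ℕ → ProbabilityMeasure W := fun n =>
      ⟨(μ n).map ι, by
        have := hprob n
        exact Measure.isProbabilityMeasure_map hmι.aemeasurable⟩
    have hcomp : IsCompact (closure (Set.range P)) := by
      apply isCompact_closure_of_isTightMeasureSet
      rw [isTightMeasureSet_iff_exists_isCompact_measure_compl_le]
      intro ε hε
      obtain ⟨r, hr0, hr⟩ := ENNReal.lt_iff_exists_nnreal_btwn.1 hε
      obtain ⟨K, hK, hK'⟩ := tight r (by exact_mod_cast hr0)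
      refine ⟨K, hK, ?_⟩
      rintro _ ⟨_, ⟨n, rfl⟩, rfl⟩
      refine (hK' n).trans ?_
      rw [ENNReal.ofReal_coe_nnreal]
      exact hr.le
    obtain ⟨ν, -, φ, hφ, hlim⟩ := hcomp.isSeqCompact (fun n => subset_closure (Set.mem_range_self n))
    have hν : ∫⁻ x, ENNReal.ofReal (‖x‖ ^ 2) ∂(ν : Measure W) ≤ ENNReal.ofReal D := by
      refine (lintegral_le_liminf_lintegral_of_forall_isOpen_measure_le_liminf_measure
        (μs := fun n => (P (φ n) : Measure W)) (f := fun x : W => ‖x‖ ^ 2) (by fun_prop)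
        (fun x => by positivity)
        (fun G hG => ProbabilityMeasure.le_liminf_measure_open_of_tendsto hlim hG)).trans ?_
      refine (liminf_le_liminf (v := fun _ => ENNReal.ofReal D)
        (Eventually.of_forall fun n => hmomW (φ n))).trans ?_
      simp
    refine ⟨φ, hφ, ν, inferInstance, ?_, ?_⟩
    · refine ⟨by fun_prop, ?_⟩
      rw [hasFiniteIntegral_iff_ofReal (Eventually.of_forall fun p => norm_nonneg p)]
      have := rem_bound one_pos (ν : Measure W) ν le_rfl _ hν
      simp only [edist_dist, dist_zero_right] at this
      refine this.trans_lt ?_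
      simp [ENNReal.mul_lt_top]
    · rw [Metric.tendsto_atTop']
      intro η hη
      have := eventually_coupling (fun n => P (φ n)) ν hlim D (fun n => hmomW (φ n)) hν
        (half_pos hη)
      obtain ⟨N, hN⟩ := eventually_atTop.1 this
      refine ⟨N, fun n hn => ?_⟩
      have h1 := W1_le (half_pos hη).le (hN n hn.le)
      have h2 := W1_nonneg ((μ (φ n)).map ι) (ν : Measure W)
      rw [Real.dist_eq, sub_zero, abs_of_nonneg h2]
      exact lt_of_le_of_lt h1 (by linarith)
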